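/- Let x₁ = f₁cos(2πθ) + εξ₁ and x₁* = f₁sin(2πθ) + εξ₁*, where ξ₁, ξ₁* are independent standard Gaussian random variables and f₁ ≠ 0. Define θ̄_ε = (2π)⁻¹ arctan(x₁*/x₁) if x₁ ≠ 0 and θ̄_ε = 1/4 otherwise. Then, for ε sufficiently small, for every T < 1/4 and every x ∈ [0,1/2], sup_{|θ|≤T} P_{θ,f}(|θ̄_ε − θ| ≥ x) ≤ exp(−2(x/ε)² f₁² cos²(2πT)). -/

import Mathlib

/-!
Put `φ = 2πθ`, `α = 2πx`, and let `ψ ∈ [-π/2, π/2]` be `2π` times the estimator, so that the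
observed point is `ρ (cos ψ, sin ψ)` for some real `ρ` of either sign (the convention `1/4` on
`x₁ = 0` is exactly what makes this true there too). The event `α ≤ |ψ - φ|` says that the observed
point lies in a double cone. That double cone is covered by two half-planes, each of which is at
distance at least `|f₁| (α / π) cos φ` from the noiseless point `f₁ (cos φ, sin φ)`
(`exists_halfPlanes`). The noise is isotropic, so by the Gaussian tail bound
`P (Z ≥ t) ≤ exp (-t² / 2) / 2` (`gaussianReal_Ici_le`) each half-plane has probability at most
`exp (-2 (x / ε)² f₁² cos² φ) / 2`, and `cos² (2πT) ≤ cos² φ`. The factor `1 / 2` in the tail bound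
pays for the two half-planes, so that the bound holds for every `ε > 0`.
-/

open MeasureTheory ProbabilityTheory Real

/-- Gaussian tail bound with the sharp constant `1 / 2`, stated with the factor `2` on the left. -/
lemma gaussianReal_Ici_le (t : ℝ) (ht : 0 ≤ t) :
    2 * gaussianReal 0 1 (Set.Ici t) ≤ ENNReal.ofReal (Real.exp (-t ^ 2 / 2)) := by
  have h0 : 2 * gaussianReal 0 1 (Set.Ici (0 : ℝ)) ≤ 1 := by
    have hneg : gaussianReal 0 1 (Set.Iio (0 : ℝ)) = gaussianReal 0 1 (Set.Ioi (0 : ℝ)) := by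
      have h := gaussianReal_map_neg (μ := 0) (v := 1)
      rw [neg_zero] at h
      conv_lhs => rw [← h]
      rw [Measure.map_apply measurable_neg measurableSet_Iio]
      congr 1
      ext y
      simp
    have : NullSingletonClass (gaussianReal 0 1) := nullSingletonClass_gaussianReal one_ne_zero
    rw [← measure_congr (Ioi_ae_eq_Ici (μ := gaussianReal 0 1) (a := (0 : ℝ))), two_mul]
    nth_rewrite 1 [← hneg]
    rw [← measure_union Set.Iio_disjoint_Ioi_same measurableSet_Ioi]
    exact prob_le_one
  have hshift : gaussianReal 0 1 (Set.Ici t) = gaussianReal (-t) 1 (Set.Ici 0) := by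
    have h := gaussianReal_map_add_const (μ := 0) (v := 1) (-t)
    rw [zero_add] at h
    rw [← h, Measure.map_apply (by fun_prop) measurableSet_Ici]
    congr 1
    ext y
    simp
  -- On `[0, ∞)` the density centred at `-t` is at most `exp (-t² / 2)` times the centred one.
  have hle : gaussianReal (-t) 1 (Set.Ici 0)
      ≤ ENNReal.ofReal (Real.exp (-t ^ 2 / 2)) * gaussianReal 0 1 (Set.Ici 0) := by
    rw [gaussianReal_apply _ one_ne_zero, gaussianReal_apply _ one_ne_zero,
      ← lintegral_const_mul _ (measurable_gaussianPDF _ _)]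
    refine setLIntegral_mono' measurableSet_Ici fun y hy => ?_
    have hy : 0 ≤ y := hy
    simp only [gaussianPDF, gaussianPDFReal]
    rw [← ENNReal.ofReal_mul (Real.exp_pos _).le]
    apply ENNReal.ofReal_le_ofReal
    rw [mul_left_comm, ← Real.exp_add]
    gcongr
    simp only [NNReal.coe_one]
    nlinarith [mul_nonneg ht hy]
  calc 2 * gaussianReal 0 1 (Set.Ici t)
      ≤ 2 * (ENNReal.ofReal (Real.exp (-t ^ 2 / 2)) * gaussianReal 0 1 (Set.Ici 0)) := by
        rw [hshift]; gcongr
    _ = ENNReal.ofReal (Real.exp (-t ^ 2 / 2)) * (2 * gaussianReal 0 1 (Set.Ici 0)) := by ring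
    _ ≤ ENNReal.ofReal (Real.exp (-t ^ 2 / 2)) * 1 := by gcongr
    _ = _ := mul_one _

/-- Rotation invariance of the noise: its component in the direction of angle `β` is standard
Gaussian, hence satisfies the tail bound. -/
lemma halfPlane_le {Ω : Type*} [MeasurableSpace Ω] (P : Measure Ω) [IsProbabilityMeasure P]
    (ξ ξstar : Ω → ℝ) (hindep : IndepFun ξ ξstar P)
    (hξ : Measure.map ξ P = gaussianReal 0 1)
    (hξs : Measure.map ξstar P = gaussianReal 0 1) (β t : ℝ) (ht : 0 ≤ t) :
    2 * P {ω | t ≤ Real.cos β * ξ ω + Real.sin β * ξstar ω}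
      ≤ ENNReal.ofReal (Real.exp (-t ^ 2 / 2)) := by
  have m1 : AEMeasurable ξ P := AEMeasurable.of_map_ne_zero (by
    rw [hξ]; exact IsProbabilityMeasure.ne_zero _)
  have m2 : AEMeasurable ξstar P := AEMeasurable.of_map_ne_zero (by
    rw [hξs]; exact IsProbabilityMeasure.ne_zero _)
  have l1 := gaussianReal_const_mul (X := ξ) ⟨m1, hξ⟩ (Real.cos β)
  have l2 := gaussianReal_const_mul (X := ξstar) ⟨m2, hξs⟩ (Real.sin β)
  have hi : IndepFun (fun ω => Real.cos β * ξ ω) (fun ω => Real.sin β * ξstar ω) P :=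
    hindep.comp (φ := fun y => Real.cos β * y) (ψ := fun y => Real.sin β * y)
      (by fun_prop) (by fun_prop)
  have hsum := gaussianReal_add_gaussianReal_of_indepFun hi l1.map_eq l2.map_eq
  have hm : Real.cos β * 0 + Real.sin β * 0 = 0 := by ring
  have hv : NNReal.mk (Real.cos β ^ 2) (sq_nonneg _) * 1
      + NNReal.mk (Real.sin β ^ 2) (sq_nonneg _) * 1 = 1 := by
    rw [mul_one, mul_one]
    exact NNReal.eq (Real.cos_sq_add_sin_sq β)
  have hlaw : Measure.map ((fun ω => Real.cos β * ξ ω) + fun ω => Real.sin β * ξstar ω) P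
      = gaussianReal 0 1 := by
    rw [hsum]
    exact congrArg₂ gaussianReal hm hv
  have := gaussianReal_Ici_le t ht
  rw [← hlaw, Measure.map_apply_of_aemeasurable
    ((m1.const_mul _).add (m2.const_mul _)) measurableSet_Ici] at this
  exact this

/-- The geometric core, for `0 ≤ φ` and `0 ≤ f`. The quantity
`ρ cos (ψ - β) - f cos (φ - β)` is the component in direction `β` of the displacement from
`f (cos φ, sin φ)` to `ρ (cos ψ, sin ψ)`. -/
lemma exists_halfPlanes_of_nonneg (φ α : ℝ) (hφ0 : 0 ≤ φ) (hφ : φ < π / 2) (hα0 : 0 ≤ α)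
    (hα : α ≤ π) :
    ∃ β₁ β₂ : ℝ, ∀ f ρ ψ : ℝ, 0 ≤ f → |ψ| ≤ π / 2 → α ≤ |ψ - φ| →
      f * (α / π * Real.cos φ) ≤ ρ * Real.cos (ψ - β₁) - f * Real.cos (φ - β₁) ∨
      f * (α / π * Real.cos φ) ≤ ρ * Real.cos (ψ - β₂) - f * Real.cos (φ - β₂) := by
  have hπ := Real.pi_pos
  have hc : 0 ≤ Real.cos φ := Real.cos_nonneg_of_mem_Icc ⟨by linarith, hφ.le⟩
  have hc1 := Real.cos_le_one φ
  have hαπ : 0 ≤ α / π := by positivity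
  have hαπ1 : α / π ≤ 1 := (div_le_one hπ).2 hα
  set α' := min α (π / 2) with hα'
  have h1 : α' ≤ α := min_le_left _ _
  have h2 : α' ≤ π / 2 := min_le_right _ _
  have h3 : 0 ≤ α' := le_min hα0 (by linarith)
  have h4 : α / 2 ≤ α' := le_min (by linarith) (by linarith)
  -- Jordan's inequality bounds the distance to a line through the origin at angle `α'`.
  have hs : α / π * Real.cos φ ≤ Real.sin α' := by
    have hj := Real.mul_le_sin h3 h2
    have : α / π ≤ 2 / π * α' := by
      rw [div_mul_eq_mul_div]; gcongr; linarith
    nlinarith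
  have e2 : ∀ ψ, Real.cos (ψ - (φ - α' - π / 2)) = -Real.sin (ψ - φ + α') := fun ψ => by
    rw [← Real.cos_add_pi_div_two]; congr 1; ring
  have e1 : ∀ ψ, Real.cos (ψ - (φ + α + π / 2)) = Real.sin (ψ - φ - α) := fun ψ => by
    rw [← Real.cos_sub_pi_div_two]; congr 1; ring
  by_cases hcase : α ≤ π / 2 - φ
  · -- The two half-planes lie beyond the lines at angles `φ ± α`.
    have hαα : α' = α := min_eq_left (by linarith)
    refine ⟨φ + α + π / 2, φ - α' - π / 2, fun f ρ ψ hf hψ h => ?_⟩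
    rw [e1, e1, e2, e2, hαα, sub_self, zero_sub, zero_add, Real.sin_neg]
    rw [hαα] at hs
    have hfs := mul_le_mul_of_nonneg_left hs hf
    obtain ⟨hψ1, hψ2⟩ := abs_le.1 hψ
    rcases le_abs.1 h with h | h
    · rcases le_total 0 ρ with hρ | hρ
      · left
        have := Real.sin_nonneg_of_nonneg_of_le_pi (x := ψ - φ - α) (by linarith) (by linarith)
        nlinarith [mul_nonneg hρ this]
      · right
        have := Real.sin_nonneg_of_nonneg_of_le_pi (x := ψ - φ + α) (by linarith) (by linarith)
        nlinarith [mul_nonneg_of_nonpos_of_nonpos hρ (neg_nonpos.2 this)]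
    · rcases le_total 0 ρ with hρ | hρ
      · right
        have := Real.sin_nonpos_of_nonpos_of_neg_pi_le (x := ψ - φ + α)
          (by linarith) (by linarith)
        nlinarith [mul_nonneg hρ (neg_nonneg.2 this)]
      · left
        have := Real.sin_nonpos_of_nonpos_of_neg_pi_le (x := ψ - φ - α)
          (by linarith) (by linarith)
        nlinarith [mul_nonneg_of_nonpos_of_nonpos hρ this]
  · -- Now `ψ` can only deviate downwards, and the first half-plane is `x₁ ≤ 0`.
    push Not at hcase
    refine ⟨π, φ - α' - π / 2, fun f ρ ψ hf hψ h => ?_⟩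
    rw [e2, e2, Real.cos_sub_pi, Real.cos_sub_pi, sub_self, zero_add]
    obtain ⟨hψ1, hψ2⟩ := abs_le.1 hψ
    rcases le_abs.1 h with h | h
    · linarith
    rcases le_total 0 ρ with hρ | hρ
    · right
      have := Real.sin_nonpos_of_nonpos_of_neg_pi_le (x := ψ - φ + α')
        (by linarith) (by linarith)
      have hfs := mul_le_mul_of_nonneg_left hs hf
      nlinarith [mul_nonneg hρ (neg_nonneg.2 this)]
    · left
      have hcψ : 0 ≤ Real.cos ψ := Real.cos_nonneg_of_mem_Icc ⟨by linarith, hψ2⟩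
      have hfs := mul_le_mul_of_nonneg_left (mul_le_of_le_one_left hc hαπ1) hf
      nlinarith [mul_nonneg_of_nonpos_of_nonpos hρ (neg_nonpos.2 hcψ)]

/-- The double cone `α ≤ |ψ - φ|` is covered by two half-planes at distance at least
`|f| (α / π) cos φ` from `f (cos φ, sin φ)`. Reflection in the first axis removes the sign condition
on `φ`, and the central symmetry removes the one on `f`. -/
lemma exists_halfPlanes (φ α f : ℝ) (hφ : |φ| < π / 2) (hα0 : 0 ≤ α) (hα : α ≤ π) :
    ∃ β₁ β₂ : ℝ, ∀ ρ ψ : ℝ, |ψ| ≤ π / 2 → α ≤ |ψ - φ| →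
      |f| * (α / π * Real.cos φ) ≤ ρ * Real.cos (ψ - β₁) - f * Real.cos (φ - β₁) ∨
      |f| * (α / π * Real.cos φ) ≤ ρ * Real.cos (ψ - β₂) - f * Real.cos (φ - β₂) := by
  have key : ∃ β₁ β₂ : ℝ, ∀ g ρ ψ : ℝ, 0 ≤ g → |ψ| ≤ π / 2 → α ≤ |ψ - φ| →
      g * (α / π * Real.cos φ) ≤ ρ * Real.cos (ψ - β₁) - g * Real.cos (φ - β₁) ∨
      g * (α / π * Real.cos φ) ≤ ρ * Real.cos (ψ - β₂) - g * Real.cos (φ - β₂) := by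
    rcases le_total 0 φ with h0 | h0
    · exact exists_halfPlanes_of_nonneg φ α h0 (abs_lt.1 hφ).2 hα0 hα
    · obtain ⟨β₁, β₂, h⟩ := exists_halfPlanes_of_nonneg (-φ) α (by linarith)
        (by linarith [(abs_lt.1 hφ).1]) hα0 hα
      refine ⟨-β₁, -β₂, fun g ρ ψ hg hψ hd => ?_⟩
      have e : ∀ y β : ℝ, Real.cos (y - -β) = Real.cos (-y - β) := fun y β => by
        rw [← Real.cos_neg]; congr 1; ring
      rw [e, e, e, e, ← Real.cos_neg φ]
      refine h g ρ (-ψ) hg (by rwa [abs_neg]) ?_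
      rwa [← abs_neg, show -(-ψ - -φ) = ψ - φ by ring]
  obtain ⟨β₁, β₂, h⟩ := key
  rcases le_total 0 f with hf | hf
  · rw [abs_of_nonneg hf]
    exact ⟨β₁, β₂, fun ρ ψ => h f ρ ψ hf⟩
  · rw [abs_of_nonpos hf]
    refine ⟨β₁ + π, β₂ + π, fun ρ ψ hψ hd => ?_⟩
    have e : ∀ y β : ℝ, Real.cos (y - (β + π)) = -Real.cos (y - β) := fun y β => by
      rw [← Real.cos_sub_pi]; congr 1; ring
    rw [e, e, e, e]
    have := h (-f) (-ρ) ψ (by linarith) hψ hd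
    simpa only [mul_neg, neg_mul] using this

/-- Signed polar coordinates: the estimator is the angle, in units of `2π`, of the line through the
origin and `(X, Y)`. The value `1/4` at `X = 0` is the vertical direction. -/
lemma exists_polar (X Y : ℝ) :
    ∃ ρ ψ : ℝ, |ψ| ≤ π / 2 ∧ X = ρ * Real.cos ψ ∧ Y = ρ * Real.sin ψ ∧
      (if X ≠ 0 then Real.arctan (Y / X) / (2 * π) else (1 : ℝ) / 4) = ψ / (2 * π) := by
  have hπ := Real.pi_pos
  by_cases hX : X = 0
  · refine ⟨Y, π / 2, (abs_of_pos (by positivity)).le, by simp [hX], by simp, ?_⟩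
    rw [if_neg (not_not.2 hX)]
    field_simp
    norm_num
  · have hc := Real.cos_arctan_pos (Y / X)
    refine ⟨X / Real.cos (Real.arctan (Y / X)), Real.arctan (Y / X),
      abs_le.2 ⟨(Real.neg_pi_div_two_lt_arctan _).le, (Real.arctan_lt_pi_div_two _).le⟩,
      by field_simp, ?_, by rw [if_pos hX]⟩
    rw [div_mul_eq_mul_div, mul_div_assoc, ← Real.tan_eq_sin_div_cos, Real.tan_arctan]
    field_simp

/-- exponential deviation bound for the preliminary estimator
θ̄_ε = (2π)⁻¹ arctan(x₁*/x₁). -/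
theorem stmt_7
    {Ω : Type*} [MeasurableSpace Ω] (P : Measure Ω) [IsProbabilityMeasure P]
    (ξ ξstar : Ω → ℝ) (hindep : IndepFun ξ ξstar P)
    (hξ : Measure.map ξ P = gaussianReal 0 1)
    (hξs : Measure.map ξstar P = gaussianReal 0 1)
    (f1 : ℝ) (hf1 : f1 ≠ 0) :
    ∃ ε₀ > (0 : ℝ), ∀ ε : ℝ, 0 < ε → ε < ε₀ →
      ∀ T : ℝ, T < 1 / 4 → ∀ x : ℝ, x ∈ Set.Icc (0 : ℝ) (1 / 2) →
        ∀ θ : ℝ, |θ| ≤ T →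
          P {ω | x ≤
              |(if f1 * Real.cos (2 * π * θ) + ε * ξ ω ≠ 0 then
                  Real.arctan ((f1 * Real.sin (2 * π * θ) + ε * ξstar ω) /
                    (f1 * Real.cos (2 * π * θ) + ε * ξ ω)) / (2 * π)
                else (1 : ℝ) / 4) - θ|}
            ≤ ENNReal.ofReal
                (Real.exp (-2 * (x / ε) ^ 2 * f1 ^ 2 * Real.cos (2 * π * T) ^ 2)) := by
  -- The bound holds for every `ε > 0`, so any threshold works.
  refine ⟨1, one_pos, fun ε hε _ T hT x hx θ hθ => ?_⟩
  obtain ⟨hx0, hx1⟩ := hx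
  have hπ := Real.pi_pos
  have hφabs : |2 * π * θ| = 2 * π * |θ| := by
    rw [abs_mul, abs_of_pos (by positivity : 0 < 2 * π)]
  have hφT : |2 * π * θ| ≤ 2 * π * T := by rw [hφabs]; gcongr
  have hTπ : 2 * π * T < π / 2 := by nlinarith
  have hφ := hφT.trans_lt hTπ
  have hcT0 : 0 ≤ Real.cos (2 * π * T) :=
    Real.cos_nonneg_of_mem_Icc ⟨by linarith [abs_nonneg (2 * π * θ)], hTπ.le⟩
  have hcT : Real.cos (2 * π * T) ≤ Real.cos (2 * π * θ) := by
    rw [← Real.cos_abs (2 * π * θ)]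
    exact Real.cos_le_cos_of_nonneg_of_le_pi (abs_nonneg _) (by linarith) hφT
  obtain ⟨β₁, β₂, hβ⟩ := exists_halfPlanes (2 * π * θ) (2 * π * x) f1 hφ
    (by positivity) (by nlinarith)
  set t := |f1| * (2 * π * x / π * Real.cos (2 * π * θ)) / ε with ht
  have ht0 : 0 ≤ t := by have := hcT0.trans hcT; positivity
  have hsub : {ω | x ≤
              |(if f1 * Real.cos (2 * π * θ) + ε * ξ ω ≠ 0 then
                  Real.arctan ((f1 * Real.sin (2 * π * θ) + ε * ξstar ω) /
                    (f1 * Real.cos (2 * π * θ) + ε * ξ ω)) / (2 * π)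
                else (1 : ℝ) / 4) - θ|} ⊆
      {ω | t ≤ Real.cos β₁ * ξ ω + Real.sin β₁ * ξstar ω} ∪
      {ω | t ≤ Real.cos β₂ * ξ ω + Real.sin β₂ * ξstar ω} := by
    intro ω hω
    rw [Set.mem_ofPred_eq] at hω
    obtain ⟨ρ, ψ, hψ, hX, hY, hest⟩ := exists_polar
      (f1 * Real.cos (2 * π * θ) + ε * ξ ω) (f1 * Real.sin (2 * π * θ) + ε * ξstar ω)
    rw [hest] at hω
    have hd : 2 * π * x ≤ |ψ - 2 * π * θ| := by
      have : ψ - 2 * π * θ = 2 * π * (ψ / (2 * π) - θ) := by field_simp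
      rw [this, abs_mul, abs_of_pos (by positivity : 0 < 2 * π)]
      gcongr
    have e : ∀ β, ρ * Real.cos (ψ - β) - f1 * Real.cos (2 * π * θ - β)
        = (Real.cos β * ξ ω + Real.sin β * ξstar ω) * ε := fun β => by
      rw [Real.cos_sub, Real.cos_sub]
      linear_combination -Real.cos β * hX - Real.sin β * hY
    have := hβ ρ ψ hψ hd
    rw [e, e] at this
    simpa only [Set.mem_union, Set.mem_ofPred_eq, ht, div_le_iff₀ hε] using this
  have hhalf : P _ ≤ _ := (measure_mono hsub).trans (measure_union_le _ _)
  have b₁ := halfPlane_le P ξ ξstar hindep hξ hξs β₁ t ht0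
  have b₂ := halfPlane_le P ξ ξstar hindep hξ hξs β₂ t ht0
  refine hhalf.trans ?_
  have hmid : P {ω | t ≤ Real.cos β₁ * ξ ω + Real.sin β₁ * ξstar ω} +
      P {ω | t ≤ Real.cos β₂ * ξ ω + Real.sin β₂ * ξstar ω}
      ≤ ENNReal.ofReal (Real.exp (-t ^ 2 / 2)) := by
    have h := add_le_add b₁ b₂
    rw [← mul_add, ← two_mul] at h
    exact (ENNReal.mul_le_mul_iff_right two_ne_zero ENNReal.ofNat_ne_top).1 h
  refine hmid.trans (ENNReal.ofReal_le_ofReal (Real.exp_le_exp.2 ?_))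
  have ht2 : -t ^ 2 / 2 = -(2 * (x / ε) ^ 2 * f1 ^ 2 * Real.cos (2 * π * θ) ^ 2) := by
    rw [ht, div_pow, mul_pow, sq_abs]
    field_simp
  rw [ht2, show -2 * (x / ε) ^ 2 * f1 ^ 2 * Real.cos (2 * π * T) ^ 2
    = -(2 * (x / ε) ^ 2 * f1 ^ 2 * Real.cos (2 * π * T) ^ 2) by ring]
  gcongr
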